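/- arXiv:1011.4090 — 2 statements merged into one kernel-verified Lean document; each statement's English description precedes it below -/
import Mathlib

section
/- Let P(t₁,…,t_n) be a symmetric polynomial in n variables (over a field of characteristic 0) such that P(x,…,x,t₁,…,t_{n−N−1}) = 0 whenever the first N+1 arguments coincide (for all x and all t's), where N+1 ≤ n. Then for every x, the polynomial (t₁,…,t_{n−N}) ↦ P(x,…,x,t₁,…,t_{n−N}) (with N copies of x) is divisible by ∏_{j=1}^{n−N} (t_j − x)². -/
/-!
Fix `N` of the arguments at `x` and let a further argument `t_k` run. At `t_k = x` the polynomial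
vanishes because `N + 1` arguments coincide, so it remains to see that `∂P/∂t_k` vanishes there too.
Differentiating the vanishing of `P` along the diagonal on which those `N + 1` arguments move
together shows that the corresponding `N + 1` partial derivatives sum to zero at a point of the
diagonal. By symmetry they are all equal there, hence each is zero as soon as `N + 1 ≠ 0`.
-/

open MvPolynomial

lemma eval_aeval_eq_eval {R σ τ : Type*} [CommSemiring R] (v : τ → R)
    (g : σ → MvPolynomial τ R) (P : MvPolynomial σ R) :
    eval v (aeval g P) = eval (fun i ↦ eval v (g i)) P := by
  simpa only [aeval_eq_eval] using comp_aeval_apply g (aeval v) P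

section Divisibility

lemma prod_pow_dvd_of_prime {ι M : Type*} [CommMonoidWithZero M] [IsCancelMulZero M]
    {s : Finset ι} {p : ι → M} {m : ι → ℕ} {a : M} (hp : ∀ i ∈ s, Prime (p i))
    (hne : (s : Set ι).Pairwise fun i j ↦ ¬p i ∣ p j) (hdvd : ∀ i ∈ s, p i ^ m i ∣ a) :
    ∏ i ∈ s, p i ^ m i ∣ a := by
  classical
  induction s using Finset.induction_on with
  | empty => simp
  | insert i s hi ih =>
    simp only [Finset.forall_mem_insert] at hp hdvd
    rw [Finset.coe_insert] at hne
    obtain ⟨b, rfl⟩ := ih hp.2 (hne.mono (Set.subset_insert _ _)) hdvd.2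
    have hprod : ¬p i ∣ ∏ j ∈ s, p j ^ m j := by
      rw [hp.1.dvd_finsetProd_iff]
      rintro ⟨j, hj, hij⟩
      exact hne (Set.mem_insert _ _) (Set.mem_insert_of_mem _ hj) (ne_of_mem_of_not_mem hj hi).symm
        (hp.1.dvd_of_dvd_pow hij)
    rw [Finset.prod_insert hi, mul_comm]
    exact mul_dvd_mul_left _ (hp.1.pow_dvd_of_dvd_mul_left _ hprod hdvd.1)

variable {R τ : Type*} [CommRing R]

lemma X_sub_C_dvd_iff_aeval_update_eq_zero [DecidableEq τ] {j : τ} {x : R}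
    {G : MvPolynomial τ R} :
    X j - C x ∣ G ↔ aeval (Function.update X j (C x) : τ → MvPolynomial τ R) G = 0 := by
  constructor
  · rintro ⟨H, rfl⟩
    simp
  · intro hG
    let π := Ideal.Quotient.mkₐ R (Ideal.span {(X j - C x : MvPolynomial τ R)})
    have hπ : ∀ i, π (Function.update X j (C x) i) = π (X i) := by
      intro i
      obtain rfl | hij := eq_or_ne i j
      · rw [Function.update_self]
        exact (Ideal.Quotient.eq.mpr (Ideal.mem_span_singleton_self _)).symm
      · rw [Function.update_of_ne hij]
    have hπG : π G = 0 := by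
      rw [← map_zero π, ← hG, comp_aeval_apply, funext hπ, ← comp_aeval_apply, aeval_X_left_apply]
    exact Ideal.mem_span_singleton.mp (Ideal.Quotient.eq_zero_iff_mem.mp hπG)

lemma not_X_sub_C_dvd_X_sub_C [Nontrivial R] {i j : τ} (hij : i ≠ j) (x y : R) :
    ¬(X i - C x : MvPolynomial τ R) ∣ X j - C y := by
  classical
  rw [X_sub_C_dvd_iff_aeval_update_eq_zero]
  intro h
  simpa [hij.symm] using congrArg (pderiv j) h

variable [IsDomain R]

lemma prime_X_sub_C (j : τ) (x : R) : Prime (X j - C x : MvPolynomial τ R) := by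
  classical
  refine ⟨fun h ↦ ?_, fun h ↦ ?_, fun a b h ↦ ?_⟩
  · simpa using congrArg (pderiv j) h
  · simpa using X_sub_C_dvd_iff_aeval_update_eq_zero.mp (h.dvd (a := 1))
  · simpa only [X_sub_C_dvd_iff_aeval_update_eq_zero, map_mul, mul_eq_zero] using h

variable [Infinite R] {j : τ} {x : R} {G : MvPolynomial τ R}

lemma X_sub_C_dvd_of_eval_eq_zero (hG : ∀ v : τ → R, v j = x → eval v G = 0) :
    X j - C x ∣ G := by
  classical
  rw [X_sub_C_dvd_iff_aeval_update_eq_zero]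
  refine MvPolynomial.funext fun v ↦ ?_
  rw [eval_aeval_eq_eval, map_zero]
  exact hG _ (by simp)

lemma X_sub_C_sq_dvd_of_eval_pderiv_eq_zero (hG : ∀ v : τ → R, v j = x → eval v G = 0)
    (hG' : ∀ v : τ → R, v j = x → eval v (pderiv j G) = 0) : (X j - C x) ^ 2 ∣ G := by
  obtain ⟨H, rfl⟩ := X_sub_C_dvd_of_eval_eq_zero hG
  rw [pow_two]
  refine mul_dvd_mul_left _ (X_sub_C_dvd_of_eval_eq_zero fun v hv ↦ ?_)
  simpa [hv] using hG' v hv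

end Divisibility

lemma derivation_aeval_eq_sum_pderiv {R σ A M : Type*} [CommSemiring R] [Fintype σ]
    [CommSemiring A] [Algebra R A] [AddCommMonoid M] [Module A M] [Module R M]
    (D : Derivation R A M) (f : σ → A) (P : MvPolynomial σ R) :
    D (aeval f P) = ∑ i, aeval f (pderiv i P) • D (f i) := by
  classical
  induction P using MvPolynomial.induction_on with
  | C a => simp
  | add p q hp hq => simp only [map_add, hp, hq, add_smul, Finset.sum_add_distrib]
  | mul_X p k hp =>
    simp [hp, pderiv_X, Pi.single_apply, add_smul, Finset.sum_add_distrib, Finset.smul_sum,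
      mul_smul, apply_ite (aeval f), ite_smul]

/-- `P` vanishes at every point whose coordinates indexed by `s` all coincide: the clustering
condition on a set of arguments. Quantifying over the common value `x` avoids choosing an index in
`s`; for empty `s` the condition says that `P` vanishes everywhere. -/
def VanishesOnDiagonal {R σ : Type*} [CommSemiring R] (P : MvPolynomial σ R) (s : Finset σ) :
    Prop :=
  ∀ (x : R) (v : σ → R), (∀ i ∈ s, v i = x) → eval v P = 0

lemma eval_pderiv_eq_eval_pderiv_of_isSymmetric {R σ : Type*} [CommSemiring R]
    {P : MvPolynomial σ R} (hP : P.IsSymmetric) {v : σ → R} {i k : σ} (hik : v i = v k) :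
    eval v (pderiv i P) = eval v (pderiv k P) := by
  classical
  have hswap : pderiv k P = rename (Equiv.swap i k) (pderiv i P) := by
    simpa only [hP _, Equiv.swap_apply_left] using pderiv_rename (Equiv.swap i k).injective i P
  rw [hswap, eval_rename, Equiv.comp_swap_eq_update, hik, Function.update_eq_self, ← hik,
    Function.update_eq_self]

namespace VanishesOnDiagonal

lemma of_card_eq {R σ : Type*} [CommSemiring R] [Finite σ] {P : MvPolynomial σ R}
    {s t : Finset σ} (hs : VanishesOnDiagonal P s) (hP : P.IsSymmetric) (hst : s.card = t.card) :
    VanishesOnDiagonal P t := by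
  classical
  intro x v hv
  let e := (Finset.equivOfCardEq hst).extendSubtype
  rw [← hP e, eval_rename]
  exact hs x _ fun i hi ↦ hv _ (Equiv.extendSubtype_mem _ i hi)

variable {R σ : Type*} [CommRing R] [IsDomain R] [Infinite R] [Finite σ]
  {P : MvPolynomial σ R} {s : Finset σ} {x : R}

lemma sum_eval_pderiv_eq_zero (hs : VanishesOnDiagonal P s) {v : σ → R}
    (hv : ∀ i ∈ s, v i = x) : ∑ i ∈ s, eval v (pderiv i P) = 0 := by
  classical
  cases nonempty_fintype σ
  let line : σ → Polynomial R := fun i ↦ if i ∈ s then Polynomial.X else Polynomial.C (v i)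
  have eval_line (y : R) (Q : MvPolynomial σ R) :
      (aeval line Q).eval y = eval (fun i ↦ if i ∈ s then y else v i) Q := by
    rw [← Polynomial.coe_aeval_eq_eval, comp_aeval_apply, aeval_eq_eval]
    congr! 3 with i
    aesop
  have eval_line_x (Q : MvPolynomial σ R) : (aeval line Q).eval x = eval v Q := by
    rw [eval_line]
    congr! 2 with i
    aesop
  have aeval_line_eq_zero : aeval line P = 0 :=
    Polynomial.funext fun y ↦ by
      rw [eval_line, Polynomial.eval_zero]
      exact hs y _ fun i hi ↦ if_pos hi
  have derivative_line (i : σ) : Polynomial.derivative' (line i) = if i ∈ s then 1 else 0 := by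
    by_cases hi : i ∈ s <;> simp [line, hi]
  have chain_rule := derivation_aeval_eq_sum_pderiv Polynomial.derivative' line P
  simpa [aeval_line_eq_zero, derivative_line, Polynomial.eval_finsetSum, eval_line_x] using
    (congrArg (Polynomial.eval x) chain_rule).symm

lemma eval_pderiv_eq_zero (hs : VanishesOnDiagonal P s) (hP : P.IsSymmetric)
    (hcard : (s.card : R) ≠ 0) {v : σ → R} (hv : ∀ i ∈ s, v i = x) {k : σ} (hk : k ∈ s) :
    eval v (pderiv k P) = 0 := by
  have hsum : (s.card : R) * eval v (pderiv k P) = 0 := calc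
    _ = ∑ _i ∈ s, eval v (pderiv k P) := by rw [Finset.sum_const, nsmul_eq_mul]
    _ = ∑ i ∈ s, eval v (pderiv i P) := Finset.sum_congr rfl fun i hi ↦
      eval_pderiv_eq_eval_pderiv_of_isSymmetric hP ((hv k hk).trans (hv i hi).symm)
    _ = 0 := hs.sum_eval_pderiv_eq_zero hv
  exact (mul_eq_zero.mp hsum).resolve_left hcard

lemma X_sub_C_sq_dvd_aeval {τ : Type*} {j : τ} {g : σ → MvPolynomial τ R}
    (hs : VanishesOnDiagonal P s) (hP : P.IsSymmetric) (hcard : (s.card : R) ≠ 0)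
    (hg : ∀ i ∈ s, ∀ v : τ → R, v j = x → eval v (g i) = x)
    (hg' : ∀ i ∉ s, pderiv j (g i) = 0) :
    (X j - C x) ^ 2 ∣ aeval g P := by
  cases nonempty_fintype σ
  refine X_sub_C_sq_dvd_of_eval_pderiv_eq_zero (fun v hv ↦ ?_) (fun v hv ↦ ?_)
  · rw [eval_aeval_eq_eval]
    exact hs x _ fun i hi ↦ hg i hi v hv
  · rw [derivation_aeval_eq_sum_pderiv, map_sum]
    refine Finset.sum_eq_zero fun i _ ↦ ?_
    by_cases hi : i ∈ s
    · rw [smul_eq_mul, map_mul, eval_aeval_eq_eval,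
        hs.eval_pderiv_eq_zero hP hcard (fun i hi ↦ hg i hi v hv) hi, zero_mul]
    · rw [hg' i hi, smul_zero, map_zero]

end VanishesOnDiagonal

lemma card_insert_filter_val_lt {n N : ℕ} {k : Fin n} (hk : N ≤ k) :
    (insert k ({i | (i : ℕ) < N} : Finset (Fin n))).card = N + 1 := by
  rw [Finset.card_insert_of_notMem (by simpa using hk), Fin.card_filter_val_lt]
  omega

theorem cluster_double_zero_general {R : Type*} [CommRing R] [IsDomain R] [Infinite R] (n N : ℕ)
    (hN : (N + 1 : R) ≠ 0) (P : MvPolynomial (Fin n) R) (hsym : P.IsSymmetric)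
    (hvan : ∀ (x : R) (v : Fin n → R), (∀ i : Fin n, (i : ℕ) < N + 1 → v i = x) → eval v P = 0)
    (x : R) :
    (∏ j : Fin (n - N), (X j - C x) ^ 2) ∣
      aeval (fun i : Fin n ↦
        if h : (i : ℕ) < N then (C x : MvPolynomial (Fin (n - N)) R)
        else X (⟨(i : ℕ) - N, by have := i.isLt; omega⟩ : Fin (n - N))) P := by
  refine prod_pow_dvd_of_prime (fun j _ ↦ prime_X_sub_C j x)
    (fun i _ j _ hij ↦ not_X_sub_C_dvd_X_sub_C hij x x) fun j _ ↦ ?_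
  have hNn : N + 1 ≤ n := Nat.sub_pos_iff_lt.mp j.pos
  let k : Fin n := ⟨N + j, by omega⟩
  let cluster : Finset (Fin n) := insert k ({i | (i : ℕ) < N} : Finset (Fin n))
  have card_cluster : cluster.card = N + 1 := card_insert_filter_val_lt (N.le_add_right j)
  have hfirst : VanishesOnDiagonal P ({i | (i : ℕ) < N + 1} : Finset (Fin n)) := by
    simpa only [VanishesOnDiagonal, Finset.mem_filter_univ] using hvan
  have hcluster : VanishesOnDiagonal P cluster := hfirst.of_card_eq hsym <| by
    rw [card_cluster, Fin.card_filter_val_lt, min_eq_right hNn]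
  refine hcluster.X_sub_C_sq_dvd_aeval hsym (by rw [card_cluster]; exact_mod_cast hN) ?_ ?_
  · intro i hi v hv
    obtain rfl | hiN := by simpa [cluster] using hi
    · simp [k, hv]
    · simp [hiN]
  · intro i hi
    obtain ⟨hik, hNi⟩ : i ≠ k ∧ N ≤ i := by simpa [cluster] using hi
    rw [dif_neg hNi.not_gt, pderiv_X_of_ne]
    simp only [k, ne_eq, Fin.ext_iff] at hik ⊢
    omega

/-- If a symmetric polynomial `P` in `n` variables vanishes whenever `N+1` of its
arguments coincide, then after setting `N` of the arguments equal to `x`, the result is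
divisible by `∏_{j=1}^{n−N} (t_j − x)²`. -/
theorem cluster_double_zero {F : Type*} [Field F] [CharZero F] (n N : ℕ) (hn : N + 1 ≤ n)
    (P : MvPolynomial (Fin n) F)
    (hsym : ∀ σ : Equiv.Perm (Fin n), MvPolynomial.rename σ P = P)
    (hvan : ∀ (x : F) (v : Fin n → F), (∀ i : Fin n, (i : ℕ) < N + 1 → v i = x) →
        MvPolynomial.eval v P = 0)
    (x : F) :
    (∏ j : Fin (n - N), (MvPolynomial.X j - MvPolynomial.C x) ^ 2) ∣
      MvPolynomial.aeval (fun i : Fin n =>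
        if h : (i : ℕ) < N then (MvPolynomial.C x : MvPolynomial (Fin (n - N)) F)
        else MvPolynomial.X (⟨(i : ℕ) - N, by have := i.isLt; omega⟩ : Fin (n - N))) P :=
  cluster_double_zero_general n N N.cast_add_one_ne_zero P hsym hvan x
end

section
/- Fix N ≥ 1, m ≥ 1, 0 ≤ k_j ≤ k ≤ N with k₁+k₂+k₃ = 2k, n = mN−k. Let P(x₁,x₂,x₃|t₁,…,t_n) denote the symmetrized parafermionic polynomial (symmetrization of the basic monomial p over the t-variables). Then P satisfies the inversion property: P(1/x₁,1/x₂,1/x₃ | 1/t₁,…,1/t_n) = ∏_{j=1}^{3} x_j^{−(m−1)k_j} · ∏_{q=1}^{n} t_q^{−2(m−1)} · P(x₁,x₂,x₃|t₁,…,t_n), as an identity of rational functions. -/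
open Finset

/-- The basic monomial `p(x₁,x₂,x₃|t₁,…,t_n)` of the parafermionic polynomial.
The `n` variables are divided into `N` groups by `grp`; the group of index `q`
belongs to the set `χ_{chi q + 1}` (value `3` meaning the set `χ₄`). -/
def basicMonomial (n N : ℕ) (grp : Fin n → Fin N) (chi : Fin N → Fin 4)
    (x : Fin 3 → ℝ) (t : Fin n → ℝ) : ℝ :=
  (∏ i : Fin n, ∏ j : Fin n, if i < j ∧ grp i = grp j then (t i - t j) ^ 2 else 1) *
  ∏ j : Fin n,
    (if chi (grp j) = 0 then (t j - x 1) * (t j - x 2)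
     else if chi (grp j) = 1 then (t j - x 0) * (t j - x 2)
     else if chi (grp j) = 2 then (t j - x 0) * (t j - x 1)
     else 1)

/-- The symmetrization of the basic monomial over the variables `t₁,…,t_n`. -/
def symMonomial (n N : ℕ) (grp : Fin n → Fin N) (chi : Fin N → Fin 4)
    (x : Fin 3 → ℝ) (t : Fin n → ℝ) : ℝ :=
  ∑ σ : Equiv.Perm (Fin n), basicMonomial n N grp chi x (t ∘ σ)

/-- The configuration data of the parafermionic polynomial `𝐏_m^{(N|k₁,k₂,k₃)}`:
the groups in `χ₄` (i.e. `chi q = 3`) have `m` elements, the others `m−1` elements;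
`χ₁, χ₂, χ₃` contain `k−k₁`, `k−k₂`, `k−k₃` groups and `χ₄` contains `N−k` groups. -/
def validConfig (n N m k k1 k2 k3 : ℕ) (grp : Fin n → Fin N) (chi : Fin N → Fin 4) : Prop :=
  (∀ q : Fin N,
      (chi q = 3 → (Finset.univ.filter fun i => grp i = q).card = m) ∧
      (chi q ≠ 3 → (Finset.univ.filter fun i => grp i = q).card = m - 1)) ∧
  (Finset.univ.filter fun q => chi q = 0).card = k - k1 ∧
  (Finset.univ.filter fun q => chi q = 1).card = k - k2 ∧
  (Finset.univ.filter fun q => chi q = 2).card = k - k3 ∧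
  (Finset.univ.filter fun q => chi q = 3).card = N - k

/-!
The monomial `p` has the same degree `d = 2(m-1)` in every `t_i`: an index in a group of size `m`
meets `m-1` squared differences, and one in a group of size `m-1` meets `m-2` squared differences
and two linear factors. Its degree in `x_a` is the number of indices attached to `x_a`, namely
`(m-1)k_a`. Writing each factor as `u⁻¹ - v⁻¹ = -(uv)⁻¹(u - v)`, the substitution of inverses
multiplies `p` by the inverse of every variable to the power of its degree; the signs, absorbed into
`(-t_i)^d`, disappear because `d` is even. The resulting prefactor is symmetric in the `t_i`, so it
comes out of the symmetrization.
-/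

section FiniteProducts

variable {ι α M : Type*} [Fintype ι] [CommMonoid M]

lemma prod_prod_lt_mul_eq_prod_pow_card [LinearOrder ι] (r : ι → ι → Prop) [DecidableRel r]
    (hr : ∀ i j, r i j → r j i) (s : ι → M) :
    ∏ i, ∏ j with i < j ∧ r i j, s i * s j = ∏ i, s i ^ #{j | i ≠ j ∧ r i j} := by
  have swap : ∏ i, ∏ j with i < j ∧ r i j, s j = ∏ i, ∏ j with j < i ∧ r i j, s i :=
    prod_comm' fun i j => by simp [show r i j ↔ r j i from ⟨hr i j, hr j i⟩]
  have card_split (i : ι) :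
      #{j | i < j ∧ r i j} + #{j | j < i ∧ r i j} = #{j | i ≠ j ∧ r i j} := by
    rw [← card_union_of_disjoint
      (disjoint_filter.2 fun j _ hlt hgt => lt_asymm hlt.1 hgt.1), ← filter_or]
    simp only [← or_and_right, ← ne_iff_lt_or_gt]
  simp only [prod_mul_distrib, swap, prod_const]
  rw [← prod_mul_distrib]
  simp only [← pow_add, card_split]

lemma prod_prod_mem_eq_prod_pow_card [Fintype α] [DecidableEq α] (A : ι → Finset α) (x : α → M) :
    ∏ j, ∏ a ∈ A j, x a = ∏ a, x a ^ #{j | a ∈ A j} := by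
  rw [prod_comm' (t' := univ) (s' := fun a => {j | a ∈ A j}) (by simp)]
  simp only [prod_const]

end FiniteProducts

section Inversion

variable {K : Type*} [Field K]

lemma inv_sub_inv_eq_neg_inv_mul {a b : K} (ha : a ≠ 0) (hb : b ≠ 0) :
    a⁻¹ - b⁻¹ = (b * -a)⁻¹ * (a - b) := by
  field_simp
  ring

lemma inv_sub_inv_sq {a b : K} (ha : a ≠ 0) (hb : b ≠ 0) :
    (a⁻¹ - b⁻¹) ^ 2 = ((-a) ^ 2 * (-b) ^ 2)⁻¹ * (a - b) ^ 2 := by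
  rw [inv_sub_inv_eq_neg_inv_mul ha hb]
  ring

lemma prod_inv_sub_inv {α : Type*} {A : Finset α} {x : α → K} (hx : ∀ a ∈ A, x a ≠ 0) {t : K}
    (ht : t ≠ 0) :
    ∏ a ∈ A, (t⁻¹ - (x a)⁻¹) = (∏ a ∈ A, x a)⁻¹ * ((-t) ^ #A)⁻¹ * ∏ a ∈ A, (t - x a) := by
  rw [prod_congr rfl fun a ha => inv_sub_inv_eq_neg_inv_mul ht (hx a ha)]
  simp only [prod_mul_distrib, prod_inv_distrib, prod_const, mul_inv]

end Inversion

section Cluster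

variable {ι κ α R K : Type*} [Fintype ι] [LinearOrder ι] [DecidableEq κ] [CommRing R] [Field K]

/-- The product of the squared differences `(t i - t j)²` over pairs of indices in a common cluster
(fibre of `g`) and of the linear factors `t j - x a` over the points `a ∈ A q` attached to the
cluster `q` of `j`. The basic monomial is the case of three points `x a`. -/
def clusterMonomial (g : ι → κ) (A : κ → Finset α) (x : α → R) (t : ι → R) : R :=
  (∏ i, ∏ j with i < j ∧ g i = g j, (t i - t j) ^ 2) * ∏ j, ∏ a ∈ A (g j), (t j - x a)

/-- The symmetrization of `clusterMonomial` in the variables `t`, not normalized by the number of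
permutations. -/
def symClusterMonomial (g : ι → κ) (A : κ → Finset α) (x : α → R) (t : ι → R) : R :=
  ∑ σ : Equiv.Perm ι, clusterMonomial g A x (t ∘ σ)

lemma prod_sq_inv_sub_inv_cluster (g : ι → κ) {t : ι → K} (ht : ∀ i, t i ≠ 0) :
    ∏ i, ∏ j with i < j ∧ g i = g j, ((t i)⁻¹ - (t j)⁻¹) ^ 2 =
      (∏ i, (-t i) ^ (2 * #{j | i ≠ j ∧ g i = g j}))⁻¹ *
        ∏ i, ∏ j with i < j ∧ g i = g j, (t i - t j) ^ 2 := by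
  simp only [pow_mul]
  rw [← prod_prod_lt_mul_eq_prod_pow_card (fun i j => g i = g j) fun _ _ => Eq.symm]
  simp only [← prod_inv_distrib, ← prod_mul_distrib, ← inv_sub_inv_sq (ht _) (ht _)]

variable [Fintype α] [DecidableEq α] {g : ι → κ} {A : κ → Finset α} {d : ℕ} {x : α → K} {t : ι → K}

lemma clusterMonomial_inversion (hd : ∀ i, 2 * #{j | i ≠ j ∧ g i = g j} + #(A (g i)) = d)
    (hx : ∀ a, x a ≠ 0) (ht : ∀ i, t i ≠ 0) :
    clusterMonomial g A (fun a => (x a)⁻¹) (fun i => (t i)⁻¹) =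
      (∏ a, x a ^ #{j | a ∈ A (g j)})⁻¹ * (∏ i, (-t i) ^ d)⁻¹ * clusterMonomial g A x t := by
  have t_degree : ∏ i, (-t i) ^ d =
      (∏ i, (-t i) ^ (2 * #{j | i ≠ j ∧ g i = g j})) * ∏ i, (-t i) ^ #(A (g i)) := by
    simp only [← prod_mul_distrib, ← pow_add, hd]
  simp only [clusterMonomial, prod_sq_inv_sub_inv_cluster g ht,
    prod_inv_sub_inv (fun a _ => hx a) (ht _), prod_mul_distrib, prod_inv_distrib,
    prod_prod_mem_eq_prod_pow_card, t_degree, mul_inv]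
  ring

theorem symMonomial_inversion_general
    (hd : ∀ i, 2 * #{j | i ≠ j ∧ g i = g j} + #(A (g i)) = d)
    (hx : ∀ a, x a ≠ 0) (ht : ∀ i, t i ≠ 0) :
    symClusterMonomial g A (fun a => (x a)⁻¹) (fun i => (t i)⁻¹) =
      (∏ a, x a ^ #{j | a ∈ A (g j)})⁻¹ * (∏ i, (-t i) ^ d)⁻¹ * symClusterMonomial g A x t := by
  simp only [symClusterMonomial, mul_sum]
  refine sum_congr rfl fun σ _ => ?_
  rw [← Equiv.prod_comp σ fun i => (-t i) ^ d]
  exact clusterMonomial_inversion hd hx fun i => ht (σ i)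

end Cluster

section Configuration

/-- The indices `a` of the points `x a` occurring in the linear factors of a group in `χ₁`, `χ₂`,
`χ₃`, `χ₄`, these four sets being numbered from `0` as in `basicMonomial`. -/
def attachedPoints : Fin 4 → Finset (Fin 3) := ![{1, 2}, {0, 2}, {0, 1}, ∅]

lemma symMonomial_eq_symClusterMonomial (n N : ℕ) (grp : Fin n → Fin N) (chi : Fin N → Fin 4)
    (x : Fin 3 → ℝ) (t : Fin n → ℝ) :
    symMonomial n N grp chi x t = symClusterMonomial grp (attachedPoints ∘ chi) x t := by
  have linear_factors (c : Fin 4) (u : ℝ) :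
      (if c = 0 then (u - x 1) * (u - x 2)
        else if c = 1 then (u - x 0) * (u - x 2)
        else if c = 2 then (u - x 0) * (u - x 1)
        else 1) = ∏ a ∈ attachedPoints c, (u - x a) := by
    fin_cases c <;> simp [attachedPoints]
  simp only [symMonomial, basicMonomial, symClusterMonomial, clusterMonomial, linear_factors,
    prod_filter, Function.comp_apply]

namespace validConfig

variable {n N m k k1 k2 k3 : ℕ} {grp : Fin n → Fin N} {chi : Fin N → Fin 4}

lemma two_mul_card_add_card_attachedPoints (h : validConfig n N m k k1 k2 k3 grp chi) (i : Fin n) :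
    2 * #{j | i ≠ j ∧ grp i = grp j} + #(attachedPoints (chi (grp i))) = 2 * (m - 1) := by
  have group_card : #{j | i ≠ j ∧ grp i = grp j} + 1 = #{j | grp j = grp i} := by
    have erase_self : ({j | i ≠ j ∧ grp i = grp j} : Finset (Fin n)) =
        ({j | grp j = grp i} : Finset (Fin n)).erase i := by
      ext j
      simp [eq_comm]
    rw [erase_self, card_erase_add_one (by simp)]
  have attached_card : ∀ c, #(attachedPoints c) = if c = 3 then 0 else 2 := by decide
  rw [attached_card]
  split_ifs with hc
  · have := (h.1 (grp i)).1 hc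
    omega
  · have := (h.1 (grp i)).2 hc
    omega

lemma card_groups_attached (h : validConfig n N m k k1 k2 k3 grp chi)
    (hk1 : k1 ≤ k) (hk2 : k2 ≤ k) (hk3 : k3 ≤ k) (hsum : k1 + k2 + k3 = 2 * k) (a : Fin 3) :
    #{q | a ∈ attachedPoints (chi q)} = ![k1, k2, k3] a := by
  obtain ⟨-, h0, h1, h2, -⟩ := h
  have card_or {b c : Fin 4} (hbc : b ≠ c) :
      #{q | chi q = b ∨ chi q = c} = #{q | chi q = b} + #{q | chi q = c} := by
    rw [filter_or, card_union_of_disjoint]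
    exact disjoint_filter.2 fun q _ hb hc => hbc (hb.symm.trans hc)
  have mem_zero : ∀ c, 0 ∈ attachedPoints c ↔ c = 1 ∨ c = 2 := by decide
  have mem_one : ∀ c, 1 ∈ attachedPoints c ↔ c = 0 ∨ c = 2 := by decide
  have mem_two : ∀ c, 2 ∈ attachedPoints c ↔ c = 0 ∨ c = 1 := by decide
  match a with
  | 0 =>
    simp only [mem_zero, card_or (show (1 : Fin 4) ≠ 2 by decide), h1, h2, Matrix.cons_val]
    omega
  | 1 =>
    simp only [mem_one, card_or (show (0 : Fin 4) ≠ 2 by decide), h0, h2, Matrix.cons_val]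
    omega
  | 2 =>
    simp only [mem_two, card_or (show (0 : Fin 4) ≠ 1 by decide), h0, h1, Matrix.cons_val]
    omega

lemma card_indices_attached (h : validConfig n N m k k1 k2 k3 grp chi)
    (hk1 : k1 ≤ k) (hk2 : k2 ≤ k) (hk3 : k3 ≤ k) (hsum : k1 + k2 + k3 = 2 * k) (a : Fin 3) :
    #{j | a ∈ attachedPoints (chi (grp j))} = (m - 1) * ![k1, k2, k3] a := by
  have group_card (q : Fin N) (hq : a ∈ attachedPoints (chi q)) : #{j | grp j = q} = m - 1 := by
    refine (h.1 q).2 fun hc => ?_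
    simp [hc, attachedPoints] at hq
  calc #{j | a ∈ attachedPoints (chi (grp j))}
      = ∑ q with a ∈ attachedPoints (chi q), #{j | grp j = q} := by
        rw [sum_card_fiberwise_eq_card_filter]
        simp only [mem_filter_univ]
    _ = #{q | a ∈ attachedPoints (chi q)} * (m - 1) :=
        sum_const_nat fun q hq => group_card q (mem_filter_univ q |>.1 hq)
    _ = (m - 1) * ![k1, k2, k3] a := by
        rw [h.card_groups_attached hk1 hk2 hk3 hsum, mul_comm]

end validConfig

end Configuration

/-- Inversion property of the symmetrized parafermionic polynomial:
`P(1/x₁,1/x₂,1/x₃|1/t₁,…,1/t_n)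
  = ∏_j x_j^{−(m−1)k_j} · ∏_q t_q^{−2(m−1)} · P(x₁,x₂,x₃|t₁,…,t_n)`. -/
theorem symMonomial_inversion (N m k k1 k2 k3 : ℕ) (hN : 1 ≤ N) (hm : 1 ≤ m)
    (hk : k ≤ N) (hk1 : k1 ≤ k) (hk2 : k2 ≤ k) (hk3 : k3 ≤ k)
    (hsum : k1 + k2 + k3 = 2 * k)
    (grp : Fin (m * N - k) → Fin N) (chi : Fin N → Fin 4)
    (hcfg : validConfig (m * N - k) N m k k1 k2 k3 grp chi)
    (x : Fin 3 → ℝ) (hx : ∀ i : Fin 3, x i ≠ 0)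
    (t : Fin (m * N - k) → ℝ) (ht : ∀ j, t j ≠ 0) :
    symMonomial (m * N - k) N grp chi (fun i => (x i)⁻¹) (fun j => (t j)⁻¹) =
      (∏ i : Fin 3, (x i) ^ ((m - 1) * ![k1, k2, k3] i))⁻¹ *
      (∏ q : Fin (m * N - k), (t q) ^ (2 * (m - 1)))⁻¹ *
      symMonomial (m * N - k) N grp chi x t := by
  simpa only [symMonomial_eq_symClusterMonomial, Function.comp_apply, (even_two_mul _).neg_pow,
    hcfg.card_indices_attached hk1 hk2 hk3 hsum] using
    symMonomial_inversion_general (A := attachedPoints ∘ chi)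
      hcfg.two_mul_card_add_card_attachedPoints hx ht
end
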